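/- Let k ≥ 2, let N be a k-k-XOR-BN on n nodes, let U be a control node set for N, and let t* be the minimum positive integer such that for every initial state x^0 and every target state x^T there exist control signals driving N from x(0)=x^0 to x(t*)=x^T in exactly t* steps. Then n/t* ≤ |U| ≤ n − t* + 1. -/

import Mathlib

namespace BN

variable {n : ℕ}

/-- The Boolean function `f` depends on input `j`. -/
def Depends (f : (Fin n → Bool) → Bool) (j : Fin n) : Prop :=
  ∃ x : Fin n → Bool, f (Function.update x j (!(x j))) ≠ f x

/-- The set of incoming nodes of node `i` (Γ⁻). -/
def inSet (F : Fin n → (Fin n → Bool) → Bool) (i : Fin n) : Set (Fin n) :=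
  {j | Depends (F i) j}

/-- The set of outgoing nodes of node `i` (Γ⁺). -/
def outSet (F : Fin n → (Fin n → Bool) → Bool) (i : Fin n) : Set (Fin n) :=
  {j | Depends (F j) i}

/-- The controlled trajectory: nodes in `U` get an xor-control signal. -/
def traj (F : Fin n → (Fin n → Bool) → Bool) (U : Finset (Fin n))
    (u : ℕ → Fin n → Bool) (x0 : Fin n → Bool) : ℕ → Fin n → Bool
  | 0 => x0
  | t + 1 => fun i =>
      if i ∈ U then Bool.xor (u t i) (F i (traj F U u x0 t))
      else F i (traj F U u x0 t)

/-- `U` is a control node set: any initial state can be driven to any target state. -/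
def IsControlSet (F : Fin n → (Fin n → Bool) → Bool) (U : Finset (Fin n)) : Prop :=
  ∀ x0 xT : Fin n → Bool, ∃ t : ℕ, 1 ≤ t ∧ ∃ u : ℕ → Fin n → Bool, traj F U u x0 t = xT

/-- XOR (parity) of the inputs in `S`. -/
def xorFun (S : Finset (Fin n)) (x : Fin n → Bool) : Bool :=
  decide ((S.filter (fun j => x j = true)).card % 2 = 1)

/-- `f` is the XOR of `k` distinct inputs, or its negation. -/
def IsKXor (k : ℕ) (f : (Fin n → Bool) → Bool) : Prop :=
  ∃ S : Finset (Fin n), S.card = k ∧ (f = xorFun S ∨ f = fun x => !(xorFun S x))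

/-- A `k`-`k`-XOR-BN: each function is a `k`-input XOR (or negation) and
every node has indegree `k` and outdegree `k`. -/
def IsKKXorBN (k : ℕ) (F : Fin n → (Fin n → Bool) → Bool) : Prop :=
  (∀ i, IsKXor k (F i)) ∧ ∀ i, (inSet F i).ncard = k ∧ (outSet F i).ncard = k

/-- All pairs of states are connected in exactly `t` steps under controls on `U`. -/
def ReachIn (F : Fin n → (Fin n → Bool) → Bool) (U : Finset (Fin n)) (t : ℕ) : Prop :=
  ∀ x0 xT : Fin n → Bool, ∃ u : ℕ → Fin n → Bool, traj F U u x0 t = xT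

/-- The element of `ZMod 2` encoded by a Boolean. -/
def toZ (b : Bool) : ZMod 2 := if b then 1 else 0

/-- The Boolean encoded by an element of `ZMod 2`. -/
def ofZ (a : ZMod 2) : Bool := decide (a = 1)

lemma toZ_ofZ (a : ZMod 2) : toZ (ofZ a) = a := by
  revert a; decide

lemma toZ_injective : Function.Injective toZ := by
  decide

lemma toZ_xor (a b : Bool) : toZ (Bool.xor a b) = toZ a + toZ b := by
  revert a b; decide

lemma toZ_not (a : Bool) : toZ (!a) = toZ a + 1 := by
  revert a; decide

lemma toZ_xorFun (S : Finset (Fin n)) (x : Fin n → Bool) :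
    toZ (xorFun S x) = ∑ j ∈ S, toZ (x j) := by
  have h : ∑ j ∈ S, toZ (x j) = ((S.filter (fun j => x j = true)).card : ZMod 2) := by
    simp [toZ]
  rw [h, xorFun]
  rcases Nat.mod_two_eq_zero_or_one (S.filter (fun j => x j = true)).card with h | h
  · rw [h, (ZMod.natCast_eq_zero_iff_even).2 (Nat.even_iff.2 h)]
    rfl
  · rw [h, (ZMod.natCast_eq_one_iff_odd).2 (Nat.odd_iff.2 h)]
    rfl

/-- A network of XOR functions and their negations is affine over `ZMod 2`. -/
lemma exists_affine {k : ℕ} {F : Fin n → (Fin n → Bool) → Bool} (hF : ∀ i, IsKXor k (F i)) :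
    ∃ (A : (Fin n → ZMod 2) →ₗ[ZMod 2] (Fin n → ZMod 2)) (c : Fin n → ZMod 2),
      ∀ x i, toZ (F i x) = A (toZ ∘ x) i + c i := by
  have key : ∀ i, ∃ (a : (Fin n → ZMod 2) →ₗ[ZMod 2] ZMod 2) (c : ZMod 2),
      ∀ x, toZ (F i x) = a (toZ ∘ x) + c := by
    intro i
    obtain ⟨S, -, h | h⟩ := hF i
    · exact ⟨∑ j ∈ S, LinearMap.proj j, 0, fun x => by simp [h, toZ_xorFun]⟩
    · exact ⟨∑ j ∈ S, LinearMap.proj j, 1, fun x => by simp [h, toZ_not, toZ_xorFun]⟩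
  choose a c h using key
  exact ⟨LinearMap.pi a, c, fun x i => h i x⟩

/-- The vectors supported on `U`. -/
def supported (U : Finset (Fin n)) : Submodule (ZMod 2) (Fin n → ZMod 2) :=
  LinearMap.ker (LinearMap.funLeft (ZMod 2) (ZMod 2) (Subtype.val : {i // i ∉ U} → Fin n))

lemma mem_supported {U : Finset (Fin n)} {v : Fin n → ZMod 2} :
    v ∈ supported U ↔ ∀ i ∉ U, v i = 0 := by
  simp [supported, funext_iff, LinearMap.funLeft]

lemma finrank_supported (U : Finset (Fin n)) :
    Module.finrank (ZMod 2) (supported U) = U.card := by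
  have h := LinearMap.finrank_range_add_finrank_ker
    (LinearMap.funLeft (ZMod 2) (ZMod 2) (Subtype.val : {i // i ∉ U} → Fin n))
  rw [LinearMap.range_eq_top.2
    (LinearMap.funLeft_surjective_of_injective _ _ _ Subtype.val_injective), finrank_top] at h
  have hc : Fintype.card {i // i ∉ U} = n - U.card := by
    rw [Fintype.card_subtype_compl]; simp
  have hle : U.card ≤ n := by simpa using U.card_le_univ
  simp only [Module.finrank_fintype_fun_eq_card, hc, Fintype.card_fin] at h
  rw [supported]
  omega

/-- One step of the growth of the controllable subspace. -/
def grow (A : (Fin n → ZMod 2) →ₗ[ZMod 2] (Fin n → ZMod 2)) (U : Finset (Fin n))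
    (W : Submodule (ZMod 2) (Fin n → ZMod 2)) : Submodule (ZMod 2) (Fin n → ZMod 2) :=
  W.map A ⊔ supported U

/-- The subspace of displacements that controls on `U` can produce in `t` steps. -/
def controllable (A : (Fin n → ZMod 2) →ₗ[ZMod 2] (Fin n → ZMod 2)) (U : Finset (Fin n))
    (t : ℕ) : Submodule (ZMod 2) (Fin n → ZMod 2) :=
  (grow A U)^[t] ⊥

lemma controllable_zero (A : (Fin n → ZMod 2) →ₗ[ZMod 2] (Fin n → ZMod 2))
    (U : Finset (Fin n)) : controllable A U 0 = ⊥ :=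
  rfl

lemma controllable_succ (A : (Fin n → ZMod 2) →ₗ[ZMod 2] (Fin n → ZMod 2))
    (U : Finset (Fin n)) (t : ℕ) :
    controllable A U (t + 1) = (controllable A U t).map A ⊔ supported U :=
  Function.iterate_succ_apply' _ _ _

lemma controllable_le_succ (A : (Fin n → ZMod 2) →ₗ[ZMod 2] (Fin n → ZMod 2))
    (U : Finset (Fin n)) (t : ℕ) : controllable A U t ≤ controllable A U (t + 1) := by
  induction t with
  | zero => exact bot_le
  | succ t ih =>
    rw [controllable_succ, controllable_succ A U (t + 1)]
    exact sup_le_sup_right (Submodule.map_mono ih) _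

lemma controllable_add_of_eq_succ {A : (Fin n → ZMod 2) →ₗ[ZMod 2] (Fin n → ZMod 2)}
    {U : Finset (Fin n)} {t : ℕ} (h : controllable A U t = controllable A U (t + 1)) (m : ℕ) :
    controllable A U (t + m) = controllable A U t := by
  have hfix : grow A U (controllable A U t) = controllable A U t :=
    (controllable_succ A U t).symm.trans h.symm
  rw [controllable, add_comm, Function.iterate_add_apply]
  exact Function.iterate_fixed hfix m

lemma finrank_controllable_le (A : (Fin n → ZMod 2) →ₗ[ZMod 2] (Fin n → ZMod 2))
    (U : Finset (Fin n)) (t : ℕ) :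
    Module.finrank (ZMod 2) (controllable A U t) ≤ t * U.card := by
  induction t with
  | zero => rw [controllable_zero, finrank_bot, zero_mul]
  | succ t ih =>
    rw [controllable_succ, add_mul, one_mul]
    calc _ ≤ Module.finrank (ZMod 2) ((controllable A U t).map A)
          + Module.finrank (ZMod 2) (supported U) := Submodule.finrank_add_le_finrank_add_finrank _ _
      _ ≤ _ := by
        rw [finrank_supported]
        gcongr
        exact (Submodule.finrank_map_le A _).trans ih

lemma traj_congr (F : Fin n → (Fin n → Bool) → Bool) (U : Finset (Fin n))
    {u v : ℕ → Fin n → Bool} (x0 : Fin n → Bool) {t : ℕ} (h : ∀ s < t, u s = v s) :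
    traj F U u x0 t = traj F U v x0 t := by
  induction t with
  | zero => rfl
  | succ t ih =>
    simp only [traj, ih fun s hs => h s (hs.trans t.lt_succ_self), h t t.lt_succ_self]

section Affine

variable {F : Fin n → (Fin n → Bool) → Bool} {A : (Fin n → ZMod 2) →ₗ[ZMod 2] (Fin n → ZMod 2)}
  {c : Fin n → ZMod 2}

lemma toZ_traj_succ (hA : ∀ x i, toZ (F i x) = A (toZ ∘ x) i + c i) (U : Finset (Fin n))
    (u : ℕ → Fin n → Bool) (x0 : Fin n → Bool) (t : ℕ) :
    toZ ∘ traj F U u x0 (t + 1) =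
      A (toZ ∘ traj F U u x0 t) + c + fun i => if i ∈ U then toZ (u t i) else 0 := by
  ext i
  by_cases hi : i ∈ U
  · simp [traj, hi, toZ_xor, hA, add_comm]
  · simp [traj, hi, hA]

/-- The states reachable in `t` steps form a translate of the controllable subspace. -/
lemma exists_traj_eq_iff (hA : ∀ x i, toZ (F i x) = A (toZ ∘ x) i + c i) (U : Finset (Fin n))
    (x0 : Fin n → Bool) (t : ℕ) (y : Fin n → Bool) :
    (∃ u, traj F U u x0 t = y) ↔
      toZ ∘ y - toZ ∘ traj F U (fun _ _ => false) x0 t ∈ controllable A U t := by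
  induction t generalizing y with
  | zero =>
    simp only [traj, controllable_zero, Submodule.mem_bot, sub_eq_zero, exists_const]
    exact ⟨fun h => h ▸ rfl, fun h => (toZ_injective.comp_left h).symm⟩
  | succ t ih =>
    have hfree : toZ ∘ traj F U (fun _ _ => false) x0 (t + 1) =
        A (toZ ∘ traj F U (fun _ _ => false) x0 t) + c := by
      rw [toZ_traj_succ hA]
      ext i
      simp [toZ]
    rw [controllable_succ, Submodule.mem_sup, hfree]
    constructor
    · rintro ⟨u, rfl⟩
      refine ⟨_, Submodule.mem_map_of_mem ((ih _).1 ⟨u, rfl⟩),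
        fun i => if i ∈ U then toZ (u t i) else 0, mem_supported.2 fun i hi => if_neg hi, ?_⟩
      rw [toZ_traj_succ hA, map_sub]
      abel
    · rintro ⟨_, ⟨w, hw, rfl⟩, e, he, hsum⟩
      have hz : toZ ∘ (ofZ ∘ (w + toZ ∘ traj F U (fun _ _ => false) x0 t)) =
          w + toZ ∘ traj F U (fun _ _ => false) x0 t :=
        funext fun i => toZ_ofZ _
      obtain ⟨u, hu⟩ := (ih (ofZ ∘ (w + toZ ∘ traj F U (fun _ _ => false) x0 t))).2
        (by rwa [hz, add_sub_cancel_right])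
      refine ⟨Function.update u t (ofZ ∘ e), toZ_injective.comp_left ?_⟩
      change toZ ∘ _ = toZ ∘ _
      have hu' : traj F U (Function.update u t (ofZ ∘ e)) x0 t = traj F U u x0 t :=
        traj_congr F U x0 fun s hs => Function.update_of_ne hs.ne _ _
      have he' : (fun i => if i ∈ U then toZ (Function.update u t (ofZ ∘ e) t i) else 0) = e := by
        ext i
        by_cases hi : i ∈ U
        · simp [hi, toZ_ofZ]
        · simp [hi, mem_supported.1 he i hi]
      rw [toZ_traj_succ hA, hu', he', hu, hz, map_add, ← sub_add_cancel (toZ ∘ y) (A _ + c),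
        ← hsum]
      abel

lemma reachIn_iff (hA : ∀ x i, toZ (F i x) = A (toZ ∘ x) i + c i) (U : Finset (Fin n)) (t : ℕ) :
    ReachIn F U t ↔ controllable A U t = ⊤ := by
  simp only [ReachIn, exists_traj_eq_iff hA]
  refine ⟨fun h => Submodule.eq_top_iff'.2 fun v => ?_, fun h => by simp [h]⟩
  have hv := h (fun _ => false)
    (ofZ ∘ (v + toZ ∘ traj F U (fun _ _ => false) (fun _ => false) t))
  have hz : toZ ∘ (ofZ ∘ (v + toZ ∘ traj F U (fun _ _ => false) (fun _ => false) t)) =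
      v + toZ ∘ traj F U (fun _ _ => false) (fun _ => false) t :=
    funext fun i => toZ_ofZ _
  rwa [hz, add_sub_cancel_right] at hv

end Affine

/-- Until the controllable subspace is everything, its dimension grows at each step. -/
lemma card_add_le_finrank_controllable {A : (Fin n → ZMod 2) →ₗ[ZMod 2] (Fin n → ZMod 2)}
    {U : Finset (Fin n)} {T : ℕ} (hT : controllable A U T = ⊤)
    (hmin : ∀ t, 1 ≤ t → controllable A U t = ⊤ → T ≤ t) {s : ℕ} (hs : s + 1 ≤ T) :
    U.card + s ≤ Module.finrank (ZMod 2) (controllable A U (s + 1)) := by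
  induction s with
  | zero =>
    rw [controllable_succ, controllable_zero, Submodule.map_bot, bot_sup_eq, finrank_supported,
      add_zero]
  | succ s ih =>
    have hlt : controllable A U (s + 1) < controllable A U (s + 1 + 1) := by
      refine lt_of_le_of_ne (controllable_le_succ A U _) fun h => ?_
      obtain ⟨m, hm⟩ := Nat.exists_eq_add_of_le (Nat.le_of_succ_le hs)
      have := hmin (s + 1) (by omega) (by rw [← controllable_add_of_eq_succ h m, ← hm, hT])
      omega
    have := Submodule.finrank_lt_finrank_of_lt hlt
    have := ih (by omega)
    omega

/-- For a `k`-`k`-XOR-BN (`k ≥ 2`) with control node set `U`, if `t*` is the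
minimum positive time in which every state can be driven to every state, then
`n / t* ≤ |U| ≤ n − t* + 1`. -/
theorem stmt6 (n k : ℕ) (hk : 2 ≤ k)
    (F : Fin n → (Fin n → Bool) → Bool) (hF : IsKKXorBN k F)
    (U : Finset (Fin n)) (hU : IsControlSet F U)
    (tstar : ℕ) (h1 : 1 ≤ tstar) (hreach : ReachIn F U tstar)
    (hmin : ∀ t : ℕ, 1 ≤ t → ReachIn F U t → tstar ≤ t) :
    (n : ℚ) / tstar ≤ U.card ∧ (U.card : ℚ) ≤ (n : ℚ) - tstar + 1 := by
  obtain ⟨A, c, hA⟩ := exists_affine hF.1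
  simp only [reachIn_iff hA] at hreach hmin
  have hn : Module.finrank (ZMod 2) (controllable A U tstar) = n := by
    rw [hreach, finrank_top]; simp
  constructor
  · rw [div_le_iff₀ (by exact_mod_cast h1), mul_comm]
    exact_mod_cast hn ▸ finrank_controllable_le A U tstar
  · obtain ⟨s, rfl⟩ := Nat.exists_eq_add_of_le' h1
    have h := card_add_le_finrank_controllable hreach hmin le_rfl
    rw [hn] at h
    have h' : (U.card : ℚ) + s ≤ n := by exact_mod_cast h
    push_cast
    linarith

end BN
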